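/- Let N ≥ 2 be an integer and s ∈ (1/2, 1). For every M > 0 and every ρ ∈ (0, 1) there exists a constant C_{ρ,M} > 0 such that for every radial u ∈ C_c^∞(B) with u ≡ 0 on the ball B_ρ: Q_{N,s,B}(u) ≥ M·‖u‖²_{L^{2*_s}(B)} − C_{ρ,M}·‖u‖²_{L²(B)}. -/

import Mathlib

open MeasureTheory Real Filter Topology Set

noncomputable section

/-- Euclidean space ℝ^N. -/
abbrev Euc (N : ℕ) := EuclideanSpace ℝ (Fin N)

/-- The normalization constant c_{N,s}. -/
def cNs (N : ℕ) (s : ℝ) : ℝ :=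
  s * (4 : ℝ) ^ s * Real.Gamma (((N : ℝ) + 2 * s) / 2) /
    (Real.pi ^ ((N : ℝ) / 2) * Real.Gamma (1 - s))

/-- The Gagliardo quadratic form Q_{N,s,U}. -/
def gagliardo (N : ℕ) (s : ℝ) (U : Set (Euc N)) (u : Euc N → ℝ) : ℝ :=
  (cNs N s / 2) * ∫ x in U, ∫ y in U, (u x - u y) ^ 2 / ‖x - y‖ ^ ((N : ℝ) + 2 * s)

/-- The L^p norm of u on a set U. -/
def lpNormOn (N : ℕ) (p : ℝ) (U : Set (Euc N)) (u : Euc N → ℝ) : ℝ :=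
  (∫ x in U, |u x| ^ p) ^ (1 / p)

/-- The fractional critical Sobolev exponent 2*_s = 2N/(N-2s). -/
def critExp (N : ℕ) (s : ℝ) : ℝ := 2 * (N : ℝ) / ((N : ℝ) - 2 * s)

/-- Smooth compactly supported test function in U. -/
def testFun (N : ℕ) (U : Set (Euc N)) (u : Euc N → ℝ) : Prop :=
  ContDiff ℝ (⊤ : ℕ∞) u ∧ HasCompactSupport u ∧ tsupport u ⊆ U

/-- The critical fractional Sobolev constant S_{N,s}(U). -/
def sobolevConst (N : ℕ) (s : ℝ) (U : Set (Euc N)) : ℝ :=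
  sInf { r | ∃ u, testFun N U u ∧ ¬ (∀ x, u x = 0) ∧
    r = gagliardo N s U u / (lpNormOn N (critExp N s) U u) ^ 2 }

/-- The open cylinder B'_r × (-r, r) in ℝ^{N-1} × ℝ. -/
def cylinder (N : ℕ) (r : ℝ) : Set (EuclideanSpace ℝ (Fin (N - 1)) × ℝ) :=
  (Metric.ball 0 r) ×ˢ (Set.Ioo (-r) r)

/-- A bounded open set is Lipschitz: near each boundary point the boundary is the
bi-Lipschitz image of a flat piece. -/
def IsLipschitzSet (N : ℕ) (Ω : Set (Euc N)) : Prop :=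
  ∀ q ∈ frontier Ω, ∃ (r C : ℝ) (Φ : EuclideanSpace ℝ (Fin (N - 1)) × ℝ → Euc N),
    0 < r ∧ 1 < C ∧
    (∀ x ∈ cylinder N r, ∀ y ∈ cylinder N r,
      C⁻¹ * dist x y ≤ dist (Φ x) (Φ y) ∧ dist (Φ x) (Φ y) ≤ C * dist x y) ∧
    IsOpen (Φ '' cylinder N r) ∧ q ∈ Φ '' cylinder N r ∧
    Φ '' ((Metric.ball 0 r) ×ˢ (Set.Ioo 0 r)) ⊆ Ω ∧
    Φ '' ((Metric.ball 0 r) ×ˢ ({0} : Set ℝ)) ⊆ frontier Ω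

/-- Membership in H^s_0(U): approximation by smooth compactly supported functions
in L²(U) and in the Gagliardo form. -/
def memHs0 (N : ℕ) (s : ℝ) (U : Set (Euc N)) (u : Euc N → ℝ) : Prop :=
  ∃ v : ℕ → Euc N → ℝ, (∀ k, testFun N U (v k)) ∧
    Tendsto (fun k => ∫ x in U, (v k x - u x) ^ 2) atTop (nhds 0) ∧
    Tendsto (fun k => gagliardo N s U (fun x => v k x - u x)) atTop (nhds 0)

/-- A radial function on ℝ^N. -/
def IsRadial (N : ℕ) (u : Euc N → ℝ) : Prop :=
  ∀ x y : Euc N, ‖x‖ = ‖y‖ → u x = u y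

/-- The open unit ball of ℝ^N. -/
def unitBall (N : ℕ) : Set (Euc N) := Metric.ball 0 1

/-- The radial critical Sobolev constant S_{N,s,rad}(B,h) on the unit ball. -/
def sobolevConstRad (N : ℕ) (s : ℝ) (h : Euc N → ℝ) : ℝ :=
  sInf { r | ∃ u, testFun N (unitBall N) u ∧ IsRadial N u ∧ ¬ (∀ x, u x = 0) ∧
    r = (gagliardo N s (unitBall N) u + ∫ x in unitBall N, h x * (u x) ^ 2) /
        (lpNormOn N (critExp N s) (unitBall N) u) ^ 2 }

/-- Membership in H^s_{0,rad}(B): radial, approximated by radial test functions. -/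
def memHs0rad (N : ℕ) (s : ℝ) (u : Euc N → ℝ) : Prop :=
  IsRadial N u ∧ ∃ v : ℕ → Euc N → ℝ,
    (∀ k, testFun N (unitBall N) (v k) ∧ IsRadial N (v k)) ∧
    Tendsto (fun k => ∫ x in unitBall N, (v k x - u x) ^ 2) atTop (nhds 0) ∧
    Tendsto (fun k => gagliardo N s (unitBall N) (fun x => v k x - u x)) atTop (nhds 0)

/-- The fractional Laplacian of a test function. -/
def fracLap (N : ℕ) (s : ℝ) (φ : Euc N → ℝ) (x : Euc N) : ℝ :=
  (cNs N s / 2) * ∫ z : Euc N, (2 * φ x - φ (x + z) - φ (x - z)) / ‖z‖ ^ ((N : ℝ) + 2 * s)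

/-!
In the variable `t = log ‖x‖` a radial function on the shell `ρ ≤ ‖x‖ ≤ 1` is a function of one real
variable, and on the line the order `s > 1/2` controls the supremum, as in Morrey's embedding.
To extract the needed one-dimensional information from the form over `B` alone, compare `u x` and
`u ((1 - h) • x)` through the values of `u` on the ball of radius `h` around `(1 - h) • x`, which
lies inside `B` for every `x ∈ B`. This bounds the squared `L²` distance between `u` and its
dilation by a multiple of `h ^ (2 * s)` times the energy. For the profile of `u` in the variable
`t`, the averages over `[t - η / 2 ^ n, t]` therefore have geometrically decaying increments, so
that `u²` is at most `A * η⁻¹ * ‖u‖₂²` plus `B * η ^ (2 * s - 1)` times the energy. Since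
`2 * s - 1 > 0`, a small scale `η` makes the weight of the energy as small as desired, and on the
ball a supremum bound yields a bound of every Lebesgue norm.
-/

open Metric
open Module (finrank)
open scoped NNReal Pointwise

section Average

/-- The average of `g` over `[t - η, t]`, written as an integral over `[0, 1]` so that `η = 0`
gives `g t` and the average depends continuously on `η`. -/
def leftAverage (g : ℝ → ℝ) (t η : ℝ) : ℝ :=
  ∫ σ in (0 : ℝ)..1, g (t - η * σ)

variable {g : ℝ → ℝ} {t η : ℝ}

lemma leftAverage_zero : leftAverage g t 0 = g t := by
  simp [leftAverage]

lemma leftAverage_eq_inv_mul_integral (hη : η ≠ 0) :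
    leftAverage g t η = η⁻¹ * ∫ τ in (t - η)..t, g τ := by
  simp [leftAverage, intervalIntegral.integral_comp_sub_mul g hη]

lemma continuous_leftAverage (hg : Continuous g) : Continuous (leftAverage g t) :=
  intervalIntegral.continuous_parametric_intervalIntegral_of_continuous' (by fun_prop) _ _

lemma leftAverage_sq_le (hg : Continuous g) :
    leftAverage g t η ^ 2 ≤ leftAverage (fun τ => g τ ^ 2) t η := by
  have : IsProbabilityMeasure (volume.restrict (Ioc (0 : ℝ) 1)) := ⟨by simp⟩
  have integrable_of_continuous {φ : ℝ → ℝ} (hφ : Continuous φ) : IntegrableOn φ (Ioc 0 1) :=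
    hφ.integrableOn_Icc.mono_set Ioc_subset_Icc_self
  simp only [leftAverage, intervalIntegral.integral_of_le zero_le_one]
  exact even_two.convexOn_pow.map_integral_le (by fun_prop) isClosed_univ (by simp)
    (integrable_of_continuous (by fun_prop)) (integrable_of_continuous (by fun_prop))

lemma leftAverage_two_mul_sub (hg : Continuous g) (hη : η ≠ 0) :
    leftAverage g t (2 * η) - leftAverage g t η =
      -(1 / 2) * leftAverage (fun τ => g τ - g (τ - η)) t η := by
  have hint (φ : ℝ → ℝ) (hφ : Continuous φ) (a b : ℝ) : IntervalIntegrable φ volume a b :=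
    hφ.intervalIntegrable a b
  have hshift : ∫ τ in (t - η)..t, g (τ - η) = ∫ τ in (t - 2 * η)..(t - η), g τ := by
    rw [intervalIntegral.integral_comp_sub_right]
    ring_nf
  have hsplit : ∫ τ in (t - 2 * η)..t, g τ =
      (∫ τ in (t - 2 * η)..(t - η), g τ) + ∫ τ in (t - η)..t, g τ :=
    (intervalIntegral.integral_add_adjacent_intervals (hint g hg _ _) (hint g hg _ _)).symm
  rw [leftAverage_eq_inv_mul_integral (mul_ne_zero two_ne_zero hη),
    leftAverage_eq_inv_mul_integral hη, leftAverage_eq_inv_mul_integral hη,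
    intervalIntegral.integral_sub (hint g hg _ _) (hint _ (by fun_prop) _ _), hshift, hsplit]
  field_simp
  ring

lemma abs_leftAverage_two_mul_sub_le {s K : ℝ} (hg : Continuous g) (hη : 0 < η)
    (h : ∫ τ in (t - η)..t, (g τ - g (τ - η)) ^ 2 ≤ K * η ^ (2 * s)) :
    |leftAverage g t (2 * η) - leftAverage g t η| ≤ √K * η ^ (s - 1 / 2) := by
  have hsq : leftAverage (fun τ => g τ - g (τ - η)) t η ^ 2 ≤ K * (η ^ (s - 1 / 2)) ^ 2 := calc
    _ ≤ leftAverage (fun τ => (g τ - g (τ - η)) ^ 2) t η := leftAverage_sq_le (by fun_prop)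
    _ = η⁻¹ * ∫ τ in (t - η)..t, (g τ - g (τ - η)) ^ 2 :=
      leftAverage_eq_inv_mul_integral hη.ne'
    _ ≤ η⁻¹ * (K * η ^ (2 * s)) := by gcongr
    _ = K * η ^ (2 * s - 1) := by rw [rpow_sub_one hη.ne']; ring
    _ = K * (η ^ (s - 1 / 2)) ^ 2 := by
      rw [← rpow_mul_natCast hη.le]
      congr 2
      push_cast
      ring
  have habs := abs_le_sqrt hsq
  rw [sqrt_mul' _ (by positivity), sqrt_sq (by positivity)] at habs
  rw [leftAverage_two_mul_sub hg hη.ne', abs_mul]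
  norm_num
  linarith [abs_nonneg (leftAverage (fun τ => g τ - g (τ - η)) t η)]

/-- The averages over `[t - η / 2 ^ n, t]` form a sequence with geometric increments and limit
`g t`. -/
lemma abs_leftAverage_sub_le {s K : ℝ} (hg : Continuous g) (hs : 1 / 2 < s) (hη : 0 < η)
    (h : ∀ δ, 0 < δ → δ ≤ η →
      ∫ τ in (t - δ)..t, (g τ - g (τ - δ)) ^ 2 ≤ K * δ ^ (2 * s)) :
    |leftAverage g t η - g t| ≤ √K * η ^ (s - 1 / 2) / (2 ^ (s - 1 / 2) - 1) := by
  have hθ : 0 < s - 1 / 2 := by linarith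
  have one_lt : 1 < (2 : ℝ) ^ (s - 1 / 2) := one_lt_rpow one_lt_two hθ
  set b : ℝ := 2 ^ (s - 1 / 2) with hb
  have hincr (n : ℕ) :
      dist (leftAverage g t (η * 2⁻¹ ^ n)) (leftAverage g t (η * 2⁻¹ ^ (n + 1))) ≤
        √K * η ^ (s - 1 / 2) * b⁻¹ * b⁻¹ ^ n := by
    have hle : η * (2⁻¹ : ℝ) ^ (n + 1) ≤ η :=
      mul_le_of_le_one_right hη.le (pow_le_one₀ (by norm_num) (by norm_num))
    have hstep := abs_leftAverage_two_mul_sub_le hg (by positivity) (h _ (by positivity) hle)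
    have hpow : ((2⁻¹ : ℝ) ^ (n + 1)) ^ (s - 1 / 2) = b⁻¹ * b⁻¹ ^ n := by
      rw [← rpow_pow_comm (by norm_num), inv_rpow zero_le_two, ← hb, pow_succ']
    rw [mul_rpow hη.le (by positivity), hpow] at hstep
    rw [Real.dist_eq]
    convert hstep using 1
    · congr 3
      ring
    · ring
  have htendsto : Tendsto (fun n : ℕ => leftAverage g t (η * 2⁻¹ ^ n)) atTop (𝓝 (g t)) := by
    have hzero : Tendsto (fun n : ℕ => η * (2⁻¹ : ℝ) ^ n) atTop (𝓝 0) := by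
      simpa using (tendsto_pow_atTop_nhds_zero_of_lt_one (r := (2⁻¹ : ℝ)) (by norm_num)
        (by norm_num)).const_mul η
    simpa only [leftAverage_zero, Function.comp_def] using
      ((continuous_leftAverage (t := t) hg).tendsto 0).comp hzero
  have hlimit := dist_le_of_le_geometric_of_tendsto₀ b⁻¹ _ (inv_lt_one_of_one_lt₀ one_lt)
    hincr htendsto
  have hb_sub : b - 1 ≠ 0 := by linarith
  simp only [pow_zero, mul_one, Real.dist_eq] at hlimit
  refine hlimit.trans_eq ?_
  field_simp

lemma sq_le_of_integral_sq_sub_le {s K : ℝ} (hg : Continuous g) (hs : 1 / 2 < s) (hη : 0 < η)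
    (hK : 0 ≤ K)
    (h : ∀ δ, 0 < δ → δ ≤ η →
      ∫ τ in (t - δ)..t, (g τ - g (τ - δ)) ^ 2 ≤ K * δ ^ (2 * s)) :
    g t ^ 2 ≤ 2 * (η⁻¹ * ∫ τ in (t - η)..t, g τ ^ 2) +
      2 * (K * η ^ (2 * s - 1) / (2 ^ (s - 1 / 2) - 1) ^ 2) := by
  have hmean : leftAverage g t η ^ 2 ≤ η⁻¹ * ∫ τ in (t - η)..t, g τ ^ 2 :=
    (leftAverage_sq_le hg).trans_eq (leftAverage_eq_inv_mul_integral hη.ne')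
  have hosc : (leftAverage g t η - g t) ^ 2 ≤
      K * η ^ (2 * s - 1) / (2 ^ (s - 1 / 2) - 1) ^ 2 := calc
    _ = |leftAverage g t η - g t| ^ 2 := (sq_abs _).symm
    _ ≤ (√K * η ^ (s - 1 / 2) / (2 ^ (s - 1 / 2) - 1)) ^ 2 := by
      gcongr
      exact abs_leftAverage_sub_le hg hs hη h
    _ = _ := by
      rw [div_pow, mul_pow, sq_sqrt hK, ← rpow_mul_natCast hη.le]
      congr 3
      push_cast
      ring
  nlinarith [sq_nonneg (leftAverage g t η + (leftAverage g t η - g t))]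

end Average

lemma measureReal_ball_pos {X : Type*} [PseudoMetricSpace X] [ProperSpace X] [MeasurableSpace X]
    (μ : Measure X) [μ.IsOpenPosMeasure] [IsFiniteMeasureOnCompacts μ] {x : X} {r : ℝ}
    (hr : 0 < r) : 0 < μ.real (ball x r) :=
  ENNReal.toReal_pos (measure_ball_pos μ x hr).ne' measure_ball_lt_top.ne

section Gagliardo

variable {E : Type*} [NormedAddCommGroup E]

/-- The integrand `(u x - u y)² / ‖x - y‖ ^ p` of the Gagliardo form; the form of order `s` in
dimension `n` has `p = n + 2 * s`. On the diagonal it is `0`. -/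
def gagliardoKernel (p : ℝ) (u : E → ℝ) (x y : E) : ℝ :=
  (u x - u y) ^ 2 / ‖x - y‖ ^ p

lemma gagliardoKernel_nonneg (p : ℝ) (u : E → ℝ) (x y : E) : 0 ≤ gagliardoKernel p u x y := by
  unfold gagliardoKernel
  positivity

lemma gagliardoKernel_le_of_lipschitzWith {p : ℝ} {u : E → ℝ} {L : ℝ≥0} (hu : LipschitzWith L u)
    (x y : E) : gagliardoKernel p u x y ≤ L ^ 2 * ‖y - x‖ ^ (-(p - 2)) := by
  obtain rfl | hxy := eq_or_ne x y
  · simp only [gagliardoKernel, sub_self, ne_eq, OfNat.ofNat_ne_zero, not_false_eq_true, zero_pow,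
      zero_div]
    positivity
  have hpos : 0 < ‖x - y‖ := norm_sub_pos_iff.2 hxy
  have hlip : |u x - u y| ≤ L * ‖x - y‖ := by
    rw [← Real.dist_eq, ← dist_eq_norm]
    exact hu.dist_le_mul x y
  rw [gagliardoKernel, norm_sub_rev y x, neg_sub, rpow_sub hpos, rpow_two, ← mul_div_assoc,
    ← mul_pow, ← sq_abs (u x - u y)]
  gcongr

lemma sq_sub_le_rpow_mul_gagliardoKernel {p r : ℝ} (hp : 0 ≤ p) (u : E → ℝ) {x y : E}
    (hr : ‖x - y‖ ≤ r) : (u x - u y) ^ 2 ≤ r ^ p * gagliardoKernel p u x y := by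
  obtain rfl | hxy := eq_or_ne x y
  · simp [gagliardoKernel]
  have hpos : 0 < ‖x - y‖ ^ p := rpow_pos_of_pos (norm_sub_pos_iff.2 hxy) p
  rw [gagliardoKernel, mul_div_assoc', le_div_iff₀ hpos, mul_comm]
  gcongr

variable [MeasurableSpace E]

/-- The inner integral of the Gagliardo form over `U`, as a function of the outer variable. -/
def gagliardoPotential (μ : Measure E) (U : Set E) (p : ℝ) (u : E → ℝ) (x : E) : ℝ :=
  ∫ y in U, gagliardoKernel p u x y ∂μ

/-- The Gagliardo form over `U`, without the normalizing constant. -/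
def gagliardoEnergy (μ : Measure E) (U : Set E) (p : ℝ) (u : E → ℝ) : ℝ :=
  ∫ x in U, gagliardoPotential μ U p u x ∂μ

lemma gagliardoPotential_nonneg (μ : Measure E) (U : Set E) (p : ℝ) (u : E → ℝ) (x : E) :
    0 ≤ gagliardoPotential μ U p u x :=
  integral_nonneg fun _ => gagliardoKernel_nonneg _ _ _ _

lemma gagliardoEnergy_nonneg (μ : Measure E) (U : Set E) (p : ℝ) (u : E → ℝ) :
    0 ≤ gagliardoEnergy μ U p u :=
  integral_nonneg fun _ => gagliardoPotential_nonneg _ _ _ _ _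

variable [BorelSpace E]

lemma measurable_gagliardoKernel [SecondCountableTopology E] (p : ℝ) {u : E → ℝ}
    (hu : Continuous u) : Measurable fun z : E × E => gagliardoKernel p u z.1 z.2 := by
  have : Measurable u := hu.measurable
  unfold gagliardoKernel
  fun_prop

/-- Compare both differences with the values of `u` on `ball w h`, all of whose points lie within
`2 * h` of `x`. -/
lemma measureReal_ball_mul_sq_sub_le {μ : Measure E} {U : Set E} {p h : ℝ} {u : E → ℝ} {x w : E}
    (hp : 0 ≤ p) (hxw : ‖x - w‖ ≤ h) (hU : ball w h ⊆ U) (hfin : μ (ball w h) ≠ ⊤)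
    (hx : IntegrableOn (gagliardoKernel p u x) U μ)
    (hw : IntegrableOn (gagliardoKernel p u w) U μ) :
    μ.real (ball w h) * (u x - u w) ^ 2 ≤
      2 * (2 * h) ^ p * gagliardoPotential μ U p u x +
        2 * h ^ p * gagliardoPotential μ U p u w := by
  have hh : 0 ≤ h := (norm_nonneg _).trans hxw
  set F : E → ℝ := fun y =>
    2 * (2 * h) ^ p * gagliardoKernel p u x y + 2 * h ^ p * gagliardoKernel p u w y with hF
  have hF_nonneg (y : E) : 0 ≤ F y := by
    have := gagliardoKernel_nonneg p u x y
    have := gagliardoKernel_nonneg p u w y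
    positivity
  have hF_int : IntegrableOn F U μ := (hx.const_mul _).add (hw.const_mul _)
  have hle : ∀ y ∈ ball w h, (u x - u w) ^ 2 ≤ F y := by
    intro y hy
    have hwy : ‖w - y‖ ≤ h := (mem_ball_iff_norm'.1 hy).le
    have hxy : ‖x - y‖ ≤ 2 * h := by linarith [norm_sub_le_norm_sub_add_norm_sub x w y]
    have := sq_sub_le_rpow_mul_gagliardoKernel hp u hxy
    have := sq_sub_le_rpow_mul_gagliardoKernel hp u hwy
    linarith [sq_nonneg (u x - u y + (u w - u y))]
  calc μ.real (ball w h) * (u x - u w) ^ 2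
      = ∫ _ in ball w h, (u x - u w) ^ 2 ∂μ := by rw [setIntegral_const, smul_eq_mul]
    _ ≤ ∫ y in ball w h, F y ∂μ :=
      setIntegral_mono_on (integrableOn_const hfin) (hF_int.mono_set hU) measurableSet_ball hle
    _ ≤ ∫ y in U, F y ∂μ :=
      setIntegral_mono_set hF_int (.of_forall hF_nonneg) hU.eventuallyLE
    _ = _ := by
      rw [hF, integral_add (hx.const_mul _) (hw.const_mul _), integral_const_mul,
        integral_const_mul]
      rfl

variable [NormedSpace ℝ E] [FiniteDimensional ℝ E] {μ : Measure E} [μ.IsAddHaarMeasure]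

/-- A majorant of the functions `‖y - x‖ ^ (-α)`, `x ∈ U`, is the translate by `x` of a single
integrable function, because the differences `y - x` stay in a fixed ball. -/
lemma exists_setIntegral_norm_sub_rpow_le [Nontrivial E] {U : Set E} (hU : Bornology.IsBounded U)
    (hUm : MeasurableSet U) {α : ℝ} (hα : α < finrank ℝ E) :
    ∃ K : ℝ, ∀ x ∈ U, IntegrableOn (fun y => ‖y - x‖ ^ (-α)) U μ ∧
      ∫ y in U, ‖y - x‖ ^ (-α) ∂μ ≤ K := by
  obtain ⟨R, hR⟩ := (hU.sub hU).subset_ball (0 : E)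
  set H : E → ℝ := (ball (0 : E) R).indicator fun z => ‖z‖ ^ (-α) with hH
  have hH_nonneg (z : E) : 0 ≤ H z := indicator_nonneg (fun z _ => by positivity) z
  have hH_int : Integrable H μ := by
    rw [hH, integrable_indicator_iff measurableSet_ball]
    refine integrableOn_ball_of_norm_le_rpow (C := 1) Module.finrank_pos hα (.of_forall fun z => ?_)
      (measurable_norm.pow_const _).aestronglyMeasurable
    rw [one_mul, norm_of_nonneg (by positivity)]
  refine ⟨∫ z, H z ∂μ, fun x hx => ?_⟩
  have heq : EqOn (fun y => H (y - x)) (fun y => ‖y - x‖ ^ (-α)) U := fun y hy =>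
    indicator_of_mem (hR (sub_mem_sub hy hx)) _
  have hHx : Integrable (fun y => H (y - x)) μ := hH_int.comp_sub_right x
  refine ⟨hHx.integrableOn.congr_fun heq hUm, ?_⟩
  calc ∫ y in U, ‖y - x‖ ^ (-α) ∂μ = ∫ y in U, H (y - x) ∂μ :=
        (setIntegral_congr_fun hUm heq).symm
    _ ≤ ∫ y, H (y - x) ∂μ := setIntegral_le_integral hHx (.of_forall fun y => hH_nonneg _)
    _ = ∫ z, H z ∂μ := integral_sub_right_eq_self H x

section Lipschitz

variable [Nontrivial E] {U : Set E} {p : ℝ} {u : E → ℝ} {L : ℝ≥0}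

lemma integrableOn_gagliardoKernel (hU : Bornology.IsBounded U) (hUm : MeasurableSet U)
    (hp : p < finrank ℝ E + 2) (hu : LipschitzWith L u) {x : E} (hx : x ∈ U) :
    IntegrableOn (gagliardoKernel p u x) U μ := by
  obtain ⟨K, hK⟩ := exists_setIntegral_norm_sub_rpow_le (μ := μ) hU hUm (sub_lt_iff_lt_add.2 hp)
  refine Integrable.mono' ((hK x hx).1.const_mul ((L : ℝ) ^ 2)) ?_ (.of_forall fun y => ?_)
  · exact ((measurable_gagliardoKernel p hu.continuous).comp
      measurable_prodMk_left).aestronglyMeasurable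
  · rw [norm_of_nonneg (gagliardoKernel_nonneg _ _ _ _)]
    exact gagliardoKernel_le_of_lipschitzWith hu x y

lemma integrableOn_gagliardoPotential (hU : Bornology.IsBounded U) (hUm : MeasurableSet U)
    (hp : p < finrank ℝ E + 2) (hu : LipschitzWith L u) :
    IntegrableOn (gagliardoPotential μ U p u) U μ := by
  obtain ⟨K, hK⟩ := exists_setIntegral_norm_sub_rpow_le (μ := μ) hU hUm (sub_lt_iff_lt_add.2 hp)
  have hmeas : StronglyMeasurable (gagliardoPotential μ U p u) :=
    (measurable_gagliardoKernel p hu.continuous).stronglyMeasurable.integral_prod_right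
  refine Measure.integrableOn_of_bounded (M := L ^ 2 * K) hU.measure_lt_top.ne
    hmeas.aestronglyMeasurable (ae_restrict_of_forall_mem hUm fun x hx => ?_)
  rw [norm_of_nonneg (gagliardoPotential_nonneg _ _ _ _ _)]
  obtain ⟨hint, hle⟩ := hK x hx
  calc gagliardoPotential μ U p u x ≤ ∫ y in U, L ^ 2 * ‖y - x‖ ^ (-(p - 2)) ∂μ :=
        setIntegral_mono_on (integrableOn_gagliardoKernel hU hUm hp hu hx) (hint.const_mul _) hUm
          fun y _ => gagliardoKernel_le_of_lipschitzWith hu x y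
    _ = L ^ 2 * ∫ y in U, ‖y - x‖ ^ (-(p - 2)) ∂μ := integral_const_mul _ _
    _ ≤ L ^ 2 * K := by gcongr

end Lipschitz

section Dilation

lemma integrableOn_comp_smul {F : E → ℝ} {U : Set E} {c : ℝ} (hc : c ≠ 0) (hUm : MeasurableSet U)
    (hF : IntegrableOn F (c • U) μ) : IntegrableOn (fun x => F (c • x)) U μ := by
  have hind : Integrable ((c • U).indicator F) μ :=
    (integrable_indicator_iff (hUm.const_smul₀ c)).2 hF
  exact (hind.comp_smul hc).integrableOn.congr_fun
    (fun x hx => indicator_of_mem (smul_mem_smul_set hx) _) hUm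

lemma setIntegral_comp_smul_le {F : E → ℝ} {U : Set E} {c : ℝ} (hc : 0 < c) (hcU : c • U ⊆ U)
    (hF : IntegrableOn F U μ) (hF_nonneg : ∀ x, 0 ≤ F x) :
    ∫ x in U, F (c • x) ∂μ ≤ (c ^ finrank ℝ E)⁻¹ * ∫ x in U, F x ∂μ := by
  rw [Measure.setIntegral_comp_smul_of_pos μ F U hc, smul_eq_mul]
  exact mul_le_mul_of_nonneg_left
    (setIntegral_mono_set hF (.of_forall hF_nonneg) hcU.eventuallyLE) (by positivity)

lemma setIntegral_ball_comp_smul_le_two_pow_mul {F : E → ℝ} {R c : ℝ} (hc : 1 / 2 ≤ c)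
    (hc1 : c ≤ 1) (hF : IntegrableOn F (ball 0 R) μ) (hF_nonneg : ∀ x, 0 ≤ F x) :
    ∫ x in ball 0 R, F (c • x) ∂μ ≤ 2 ^ finrank ℝ E * ∫ x in ball 0 R, F x ∂μ := by
  have hc0 : 0 < c := one_half_pos.trans_le hc
  have hsub : c • ball (0 : E) R ⊆ ball 0 R :=
    balanced_ball_zero _ (by rwa [norm_of_nonneg hc0.le])
  refine (setIntegral_comp_smul_le hc0 hsub hF hF_nonneg).trans ?_
  have : 0 ≤ ∫ x in ball 0 R, F x ∂μ := integral_nonneg hF_nonneg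
  rw [← inv_pow]
  gcongr
  exact inv_le_of_inv_le₀ two_pos (by linarith)

variable [Nontrivial E] {p h : ℝ} {u : E → ℝ} {L : ℝ≥0}

lemma measureReal_ball_mul_sq_sub_smul_le (hp : 0 ≤ p) (hp' : p < finrank ℝ E + 2)
    (hu : LipschitzWith L u) (hh : 0 < h) (hh1 : h < 1) {x : E} (hx : x ∈ ball 0 1) :
    μ.real (ball 0 1) * h ^ finrank ℝ E * (u x - u ((1 - h) • x)) ^ 2 ≤
      2 * (2 * h) ^ p * gagliardoPotential μ (ball 0 1) p u x +
        2 * h ^ p * gagliardoPotential μ (ball 0 1) p u ((1 - h) • x) := by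
  have hx1 : ‖x‖ ≤ 1 := (mem_ball_zero_iff.1 hx).le
  have hnorm : ‖(1 - h) • x‖ ≤ 1 - h := by
    rw [norm_smul, norm_of_nonneg (by linarith)]
    exact mul_le_of_le_one_right (by linarith) hx1
  have hdist : ‖x - (1 - h) • x‖ ≤ h := by
    rw [show x - (1 - h) • x = h • x by module, norm_smul, norm_of_nonneg hh.le]
    exact mul_le_of_le_one_right hh.le hx1
  have hball : ball ((1 - h) • x) h ⊆ ball 0 1 :=
    ball_subset_ball' (by rw [dist_zero_right]; linarith)
  have hvol : μ.real (ball ((1 - h) • x) h) = μ.real (ball 0 1) * h ^ finrank ℝ E := by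
    rw [measureReal_def, Measure.addHaar_ball_of_pos μ _ hh, ENNReal.toReal_mul,
      ENNReal.toReal_ofReal (by positivity), mul_comm, measureReal_def]
  have hint {z : E} (hz : z ∈ ball (0 : E) 1) :
      IntegrableOn (gagliardoKernel p u z) (ball 0 1) μ :=
    integrableOn_gagliardoKernel isBounded_ball measurableSet_ball hp' hu hz
  rw [← hvol]
  exact measureReal_ball_mul_sq_sub_le hp hdist hball measure_ball_lt_top.ne (hint hx)
    (hint (hball (mem_ball_self hh)))

lemma setIntegral_sq_sub_smul_le (hp : 0 ≤ p) (hp' : p < finrank ℝ E + 2)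
    (hu : LipschitzWith L u) (hh : 0 < h) (hh' : h ≤ 1 / 2) :
    μ.real (ball 0 1) * h ^ finrank ℝ E * ∫ x in ball 0 1, (u x - u ((1 - h) • x)) ^ 2 ∂μ ≤
      (2 * 2 ^ p + 2 * 2 ^ finrank ℝ E) * h ^ p * gagliardoEnergy μ (ball 0 1) p u := by
  set I := gagliardoPotential μ (ball 0 1) p u
  have hc : 0 < 1 - h := by linarith
  have hsub : (1 - h) • ball (0 : E) 1 ⊆ ball 0 1 :=
    balanced_ball_zero _ (by rw [norm_of_nonneg hc.le]; linarith)
  have hI_int : IntegrableOn I (ball 0 1) μ :=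
    integrableOn_gagliardoPotential isBounded_ball measurableSet_ball hp' hu
  have hIc_int : IntegrableOn (fun x => I ((1 - h) • x)) (ball 0 1) μ :=
    integrableOn_comp_smul hc.ne' measurableSet_ball (hI_int.mono_set hsub)
  have hIc_le : ∫ x in ball 0 1, I ((1 - h) • x) ∂μ ≤
      2 ^ finrank ℝ E * ∫ x in ball 0 1, I x ∂μ :=
    setIntegral_ball_comp_smul_le_two_pow_mul (by linarith) (by linarith) hI_int
      (gagliardoPotential_nonneg _ _ _ _)
  have hu_int : IntegrableOn (fun x => (u x - u ((1 - h) • x)) ^ 2) (ball 0 1) μ := by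
    have huc := hu.continuous
    have : Continuous fun x => (u x - u ((1 - h) • x)) ^ 2 := by fun_prop
    exact (this.continuousOn.integrableOn_compact (isCompact_closedBall (0 : E) 1)).mono_set
      ball_subset_closedBall
  calc _ = ∫ x in ball 0 1,
          μ.real (ball 0 1) * h ^ finrank ℝ E * (u x - u ((1 - h) • x)) ^ 2 ∂μ :=
        (integral_const_mul _ _).symm
    _ ≤ ∫ x in ball 0 1, (2 * (2 * h) ^ p * I x + 2 * h ^ p * I ((1 - h) • x)) ∂μ :=
      setIntegral_mono_on (hu_int.const_mul _) ((hI_int.const_mul _).add (hIc_int.const_mul _))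
        measurableSet_ball fun x hx =>
          measureReal_ball_mul_sq_sub_smul_le hp hp' hu hh (by linarith) hx
    _ = 2 * (2 * h) ^ p * (∫ x in ball 0 1, I x ∂μ) +
          2 * h ^ p * ∫ x in ball 0 1, I ((1 - h) • x) ∂μ := by
      rw [integral_add (hI_int.const_mul _) (hIc_int.const_mul _), integral_const_mul,
        integral_const_mul]
    _ ≤ 2 * (2 * h) ^ p * (∫ x in ball 0 1, I x ∂μ) +
          2 * h ^ p * (2 ^ finrank ℝ E * ∫ x in ball 0 1, I x ∂μ) := by gcongr
    _ = _ := by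
      rw [mul_rpow zero_le_two hh.le, gagliardoEnergy]
      ring

lemma setIntegral_sq_sub_smul_le_mul_rpow {s : ℝ} (hs : 0 ≤ s) (hs1 : s < 1)
    (hu : LipschitzWith L u) (hh : 0 < h) (hh' : h ≤ 1 / 2) :
    ∫ x in ball 0 1, (u x - u ((1 - h) • x)) ^ 2 ∂μ ≤
      (2 * 2 ^ (finrank ℝ E + 2 * s) + 2 * 2 ^ finrank ℝ E) / μ.real (ball (0 : E) 1) *
        gagliardoEnergy μ (ball 0 1) (finrank ℝ E + 2 * s) u * h ^ (2 * s) := by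
  have hle := setIntegral_sq_sub_smul_le (μ := μ) (p := finrank ℝ E + 2 * s) (by positivity)
    (by linarith) hu hh hh'
  rw [rpow_add hh, rpow_natCast] at hle
  rw [div_mul_eq_mul_div, div_mul_eq_mul_div, le_div_iff₀ (measureReal_ball_pos μ one_pos)]
  refine le_of_mul_le_mul_left ?_ (pow_pos hh (finrank ℝ E))
  linarith

end Dilation

end Gagliardo

section Radial

variable {E : Type*} [NormedAddCommGroup E] [NormedSpace ℝ E] [FiniteDimensional ℝ E]
  [Nontrivial E] [MeasurableSpace E] [BorelSpace E] (μ : Measure E) [μ.IsAddHaarMeasure]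

lemma setIntegral_ball_fun_norm (ψ : ℝ → ℝ) (R : ℝ) :
    ∫ x in ball 0 R, ψ ‖x‖ ∂μ =
      finrank ℝ E * μ.real (ball 0 1) * ∫ r in Ioo 0 R, r ^ (finrank ℝ E - 1) * ψ r := by
  have hball : (ball (0 : E) R).indicator (fun x => ψ ‖x‖) = fun x => (Iio R).indicator ψ ‖x‖ := by
    ext x
    simp [indicator]
  have hIoo : ∫ r in Ioi (0 : ℝ), r ^ (finrank ℝ E - 1) • (Iio R).indicator ψ r =
      ∫ r in Ioo 0 R, r ^ (finrank ℝ E - 1) * ψ r := by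
    rw [← Ioi_inter_Iio, ← setIntegral_indicator measurableSet_Iio]
    congr 1
    ext r
    by_cases hr : r < R <;> simp [indicator, hr]
  rw [← integral_indicator measurableSet_ball, hball, integral_fun_norm_addHaar μ, hIoo,
    nsmul_eq_mul, smul_eq_mul, mul_assoc]

lemma exp_pow_mul_integral_comp_exp_le {ψ : ℝ → ℝ} (hψ : Continuous ψ) (hψ_nonneg : ∀ r, 0 ≤ ψ r)
    {a b R : ℝ} (hab : a ≤ b) (hb : exp b ≤ R) :
    finrank ℝ E * μ.real (ball 0 1) * exp a ^ finrank ℝ E * ∫ t in a..b, ψ (exp t) ≤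
      ∫ x in ball 0 R, ψ ‖x‖ ∂μ := by
  obtain ⟨n, hn⟩ : ∃ n, finrank ℝ E = n + 1 := Nat.exists_eq_add_one.2 Module.finrank_pos
  rw [setIntegral_ball_fun_norm, mul_assoc _ (exp a ^ _), hn, Nat.add_sub_cancel]
  gcongr
  calc exp a ^ (n + 1) * ∫ t in a..b, ψ (exp t)
      = ∫ t in a..b, exp a ^ (n + 1) * ψ (exp t) :=
        (intervalIntegral.integral_const_mul _ _).symm
    _ ≤ ∫ t in a..b, exp t ^ n * ψ (exp t) * exp t := by
      refine intervalIntegral.integral_mono_on hab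
        (Continuous.intervalIntegrable (by fun_prop) _ _)
        (Continuous.intervalIntegrable (by fun_prop) _ _) fun t ht => ?_
      rw [mul_right_comm, ← pow_succ]
      have := hψ_nonneg (exp t)
      have := ht.1
      gcongr
    _ = ∫ r in exp a..exp b, r ^ n * ψ r :=
      intervalIntegral.integral_comp_mul_deriv (g := fun r => r ^ n * ψ r)
        (fun t _ => hasDerivAt_exp t) continuous_exp.continuousOn (by fun_prop)
    _ ≤ ∫ r in Ioo 0 R, r ^ n * ψ r := by
      rw [intervalIntegral.integral_of_le (exp_le_exp.2 hab), ← integral_Ioc_eq_integral_Ioo]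
      refine setIntegral_mono_set ?_ ?_ (Ioc_subset_Ioc (exp_pos a).le hb).eventuallyLE
      · exact Continuous.integrableOn_Ioc (by fun_prop)
      · refine ae_restrict_of_forall_mem measurableSet_Ioc fun r hr => ?_
        exact mul_nonneg (pow_nonneg hr.1.le n) (hψ_nonneg r)

lemma exists_integral_comp_exp_le {ρ : ℝ} (hρ : 0 < ρ) :
    ∃ C : ℝ, 0 < C ∧ ∀ ψ : ℝ → ℝ, Continuous ψ → (∀ r, 0 ≤ ψ r) →
      ∀ t, ρ ≤ exp t → exp t ≤ 1 → ∀ η, 0 ≤ η → η ≤ 1 →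
        ∫ τ in (t - η)..t, ψ (exp τ) ≤ C * ∫ x in ball 0 1, ψ ‖x‖ ∂μ := by
  have hvol : 0 < μ.real (ball (0 : E) 1) := measureReal_ball_pos μ one_pos
  have hdim : 0 < finrank ℝ E := Module.finrank_pos
  set β : ℝ := finrank ℝ E * μ.real (ball (0 : E) 1) * (ρ * exp (-1)) ^ finrank ℝ E with hβ
  have hβ_pos : 0 < β := by positivity
  refine ⟨β⁻¹, by positivity, fun ψ hψ hψ_nonneg t hρt ht η hη hη1 => ?_⟩
  have hexp : ρ * exp (-1) ≤ exp (t - η) := by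
    rw [sub_eq_add_neg, exp_add]
    gcongr
  have hint_nonneg : 0 ≤ ∫ τ in (t - η)..t, ψ (exp τ) :=
    intervalIntegral.integral_nonneg (by linarith) fun τ _ => hψ_nonneg _
  rw [le_inv_mul_iff₀ hβ_pos]
  calc β * ∫ τ in (t - η)..t, ψ (exp τ)
      ≤ finrank ℝ E * μ.real (ball (0 : E) 1) * exp (t - η) ^ finrank ℝ E *
          ∫ τ in (t - η)..t, ψ (exp τ) := by
        rw [hβ]
        gcongr
    _ ≤ ∫ x in ball 0 1, ψ ‖x‖ ∂μ :=
      exp_pow_mul_integral_comp_exp_le μ hψ hψ_nonneg (by linarith) ht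

/-- A shift by `η` of the variable `log ‖x‖` is the dilation `x ↦ exp (-η) • x`. -/
lemma exists_integral_sq_sub_comp_exp_le {ρ s : ℝ} (hρ : 0 < ρ) (hs : 0 ≤ s) (hs1 : s < 1) :
    ∃ C : ℝ, 0 < C ∧ ∀ (f : ℝ → ℝ) (L : ℝ≥0), LipschitzWith L f →
      ∀ t, ρ ≤ exp t → exp t ≤ 1 → ∀ η, 0 < η → η ≤ 1 / 2 →
        ∫ τ in (t - η)..t, (f (exp τ) - f (exp (τ - η))) ^ 2 ≤
          C * gagliardoEnergy μ (ball 0 1) (finrank ℝ E + 2 * s) (fun x => f ‖x‖) *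
            η ^ (2 * s) := by
  obtain ⟨C, hC, hC_le⟩ := exists_integral_comp_exp_le μ hρ
  have hvol : 0 < μ.real (ball (0 : E) 1) := measureReal_ball_pos μ one_pos
  set V : ℝ := (2 * 2 ^ (finrank ℝ E + 2 * s) + 2 * 2 ^ finrank ℝ E) / μ.real (ball (0 : E) 1)
  refine ⟨C * V, by positivity, fun f L hf t hρt ht η hη hη' => ?_⟩
  set G := gagliardoEnergy μ (ball (0 : E) 1) (finrank ℝ E + 2 * s) fun x => f ‖x‖
  have hG : 0 ≤ G := gagliardoEnergy_nonneg _ _ _ _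
  have hfc : Continuous f := hf.continuous
  set h := 1 - exp (-η)
  have hh : 0 < h := sub_pos.2 (exp_lt_one_iff.2 (neg_lt_zero.2 hη))
  have hhη : h ≤ η := by linarith [one_sub_le_exp_neg η]
  have one_sub_h : 1 - h = exp (-η) := sub_sub_cancel _ _
  have hlip : LipschitzWith L fun x : E => f ‖x‖ := by
    simpa only [mul_one, Function.comp_def] using hf.comp lipschitzWith_one_norm
  have hdil : ∫ x in ball (0 : E) 1, (f ‖x‖ - f ‖(1 - h) • x‖) ^ 2 ∂μ ≤ V * G * h ^ (2 * s) :=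
    setIntegral_sq_sub_smul_le_mul_rpow hs hs1 hlip hh (hhη.trans hη')
  calc ∫ τ in (t - η)..t, (f (exp τ) - f (exp (τ - η))) ^ 2
      = ∫ τ in (t - η)..t, (f (exp τ) - f (exp (-η) * exp τ)) ^ 2 := by
        simp only [← exp_add, neg_add_eq_sub]
    _ ≤ C * ∫ x in ball (0 : E) 1, (f ‖x‖ - f (exp (-η) * ‖x‖)) ^ 2 ∂μ :=
      hC_le (fun r => (f r - f (exp (-η) * r)) ^ 2) (by fun_prop) (fun r => sq_nonneg _) t hρt ht
        η hη.le (by linarith)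
    _ = C * ∫ x in ball (0 : E) 1, (f ‖x‖ - f ‖(1 - h) • x‖) ^ 2 ∂μ := by
      simp only [norm_smul, one_sub_h, norm_of_nonneg (exp_pos (-η)).le]
    _ ≤ C * (V * G * η ^ (2 * s)) := by
      grw [hdil, hhη]
    _ = _ := by ring

lemma exists_sq_le_inv_mul_add_rpow_mul {ρ s : ℝ} (hρ : 0 < ρ) (hs : s ∈ Ioo (1 / 2) 1) :
    ∃ A B : ℝ, 0 < A ∧ 0 < B ∧ ∀ η, 0 < η → η ≤ 1 / 2 →
      ∀ (f : ℝ → ℝ) (L : ℝ≥0), LipschitzWith L f → ∀ r, ρ ≤ r → r ≤ 1 →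
        f r ^ 2 ≤ A * η⁻¹ * ∫ x in ball (0 : E) 1, f ‖x‖ ^ 2 ∂μ +
          B * η ^ (2 * s - 1) *
            gagliardoEnergy μ (ball 0 1) (finrank ℝ E + 2 * s) (fun x : E => f ‖x‖) := by
  obtain ⟨C, hC, hC_le⟩ := exists_integral_comp_exp_le μ hρ
  obtain ⟨D, hD, hD_le⟩ :=
    exists_integral_sq_sub_comp_exp_le μ hρ (s := s) (by linarith [hs.1]) hs.2
  have : 0 < (2 : ℝ) ^ (s - 1 / 2) - 1 :=
    sub_pos.2 (one_lt_rpow one_lt_two (by linarith [hs.1]))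
  refine ⟨2 * C, 2 * D / (2 ^ (s - 1 / 2) - 1) ^ 2, by positivity, by positivity,
    fun η hη hη' f L hf r hρr hr => ?_⟩
  have hr_exp : exp (log r) = r := exp_log (hρ.trans_le hρr)
  rw [← hr_exp] at hρr hr
  have hfc : Continuous f := hf.continuous
  set G := gagliardoEnergy μ (ball (0 : E) 1) (finrank ℝ E + 2 * s) fun x => f ‖x‖
  have hG : 0 ≤ G := gagliardoEnergy_nonneg _ _ _ _
  have hsup := sq_le_of_integral_sq_sub_le (g := fun τ => f (exp τ)) (t := log r) (by fun_prop)
    hs.1 hη (show 0 ≤ D * G by positivity)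
    fun δ hδ hδη => hD_le f L hf (log r) hρr hr δ hδ (hδη.trans hη')
  have hmass := hC_le (fun r => f r ^ 2) (by fun_prop) (fun r => sq_nonneg _) (log r) hρr hr η
    hη.le (by linarith)
  calc f r ^ 2 ≤ _ := by simpa only [hr_exp] using hsup
    _ ≤ 2 * (η⁻¹ * (C * ∫ x in ball (0 : E) 1, f ‖x‖ ^ 2 ∂μ)) +
        2 * (D * G * η ^ (2 * s - 1) / (2 ^ (s - 1 / 2) - 1) ^ 2) := by gcongr
    _ = _ := by ring

lemma exists_pos_le_mul_rpow_le {a θ : ℝ} (ha : 0 < a) (hθ : 0 < θ) (B : ℝ) {ε : ℝ}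
    (hε : 0 < ε) : ∃ η, 0 < η ∧ η ≤ a ∧ B * η ^ θ ≤ ε := by
  have htendsto : Tendsto (fun η : ℝ => B * η ^ θ) (𝓝 0) (𝓝 0) := by
    have hcont : Continuous fun η : ℝ => B * η ^ θ :=
      continuous_const.mul (continuous_id.rpow_const fun _ => .inr hθ.le)
    simpa [hθ.ne'] using hcont.tendsto 0
  obtain ⟨η, hle, hη, hηa⟩ := ((htendsto.eventually_le_const hε).filter_mono nhdsWithin_le_nhds).and
    (Ioc_mem_nhdsGT ha) |>.exists
  exact ⟨η, hη, hηa, hle⟩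

lemma exists_sq_le_mul_gagliardoEnergy_add {ρ s ε : ℝ} (hρ : 0 < ρ) (hs : s ∈ Ioo (1 / 2) 1)
    (hε : 0 < ε) :
    ∃ C : ℝ, 0 < C ∧ ∀ (f : ℝ → ℝ) (L : ℝ≥0), LipschitzWith L f → ∀ r, ρ ≤ r → r ≤ 1 →
      f r ^ 2 ≤ ε * gagliardoEnergy μ (ball 0 1) (finrank ℝ E + 2 * s) (fun x : E => f ‖x‖) +
        C * ∫ x in ball (0 : E) 1, f ‖x‖ ^ 2 ∂μ := by
  obtain ⟨A, B, hA, -, hle⟩ := exists_sq_le_inv_mul_add_rpow_mul μ hρ hs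
  have hθ : 0 < 2 * s - 1 := by linarith [hs.1]
  obtain ⟨η, hη, hη', hηε⟩ := exists_pos_le_mul_rpow_le one_half_pos hθ B hε
  refine ⟨A * η⁻¹, by positivity, fun f L hf r hρr hr => ?_⟩
  have hG := gagliardoEnergy_nonneg μ (ball 0 1) (finrank ℝ E + 2 * s) fun x : E => f ‖x‖
  linarith [hle η hη hη' f L hf r hρr hr, mul_le_mul_of_nonneg_right hηε hG]

end Radial

section UnitBall

variable {N : ℕ}

lemma IsRadial.exists_lipschitzWith_profile (hN : 0 < N) {u : Euc N → ℝ} {L : ℝ≥0}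
    (hrad : IsRadial N u) (hu : LipschitzWith L u) :
    ∃ f : ℝ → ℝ, LipschitzWith L f ∧ u = fun x => f ‖x‖ := by
  have : Nonempty (Fin N) := ⟨⟨0, hN⟩⟩
  obtain ⟨e, he⟩ := exists_norm_eq (Euc N) zero_le_one
  refine ⟨fun r => u (r • e), .of_dist_le_mul fun r r' => ?_, funext fun x => ?_⟩
  · simpa only [dist_eq_norm, ← sub_smul, norm_smul, he, mul_one] using
      hu.dist_le_mul (r • e) (r' • e)
  · exact hrad _ _ (by rw [norm_smul, he, norm_norm, mul_one])

lemma testFun.exists_lipschitzWith {U : Set (Euc N)} {u : Euc N → ℝ} (hu : testFun N U u) :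
    ∃ L : ℝ≥0, LipschitzWith L u :=
  ContDiff.lipschitzWith_of_hasCompactSupport hu.2.1 hu.1 (by simp)

lemma cNs_pos (N : ℕ) {s : ℝ} (hs : s ∈ Ioo 0 1) : 0 < cNs N s := by
  obtain ⟨hs0, hs1⟩ := hs
  have : 0 < Gamma (((N : ℝ) + 2 * s) / 2) := Gamma_pos_of_pos (by positivity)
  have : 0 < Gamma (1 - s) := Gamma_pos_of_pos (sub_pos.2 hs1)
  unfold cNs
  positivity

lemma critExp_pos {s : ℝ} (hN : 0 < N) (hs : 2 * s < N) : 0 < critExp N s := by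
  have : 0 < (N : ℝ) - 2 * s := sub_pos.2 hs
  unfold critExp
  positivity

lemma gagliardo_eq_mul_gagliardoEnergy (s : ℝ) (U : Set (Euc N)) (u : Euc N → ℝ) :
    gagliardo N s U u = cNs N s / 2 * gagliardoEnergy volume U (N + 2 * s) u :=
  rfl

lemma lpNormOn_sq_le {q X : ℝ} {U : Set (Euc N)} {u : Euc N → ℝ} (hq : 0 < q)
    (hU : volume U ≠ ⊤) (hX : 0 ≤ X) (hu : ∀ x ∈ U, u x ^ 2 ≤ X) :
    lpNormOn N q U u ^ 2 ≤ (volume.real U ^ (1 / q)) ^ 2 * X := by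
  have hint_nonneg : 0 ≤ ∫ x in U, |u x| ^ q := integral_nonneg fun _ => by positivity
  have hint : ∫ x in U, |u x| ^ q ≤ √X ^ q * volume.real U := by
    refine (le_norm_self _).trans
      (norm_setIntegral_le_of_norm_le_const hU.lt_top fun x hx => ?_)
    rw [norm_of_nonneg (by positivity)]
    exact rpow_le_rpow (abs_nonneg _) (abs_le_sqrt (hu x hx)) hq.le
  have hroot : lpNormOn N q U u ≤ √X * volume.real U ^ (1 / q) := calc
    _ ≤ (√X ^ q * volume.real U) ^ (1 / q) := rpow_le_rpow hint_nonneg hint (by positivity)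
    _ = _ := by
      rw [mul_rpow (by positivity) measureReal_nonneg, one_div,
        rpow_rpow_inv (by positivity) hq.ne']
  have hnorm_nonneg : 0 ≤ lpNormOn N q U u := rpow_nonneg hint_nonneg _
  calc _ ≤ (√X * volume.real U ^ (1 / q)) ^ 2 := by gcongr
    _ = _ := by rw [mul_pow, sq_sqrt hX, mul_comm]

end UnitBall

theorem statement13_general {N : ℕ} (hN : 0 < N) {s : ℝ} (hs : s ∈ Ioo (1 / 2) 1) {q : ℝ}
    (hq : 0 < q) {M : ℝ} (hM : 0 < M) {ρ : ℝ} (hρ : 0 < ρ) :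
    ∃ C : ℝ, 0 < C ∧ ∀ (u : Euc N → ℝ) (L : ℝ≥0), LipschitzWith L u → IsRadial N u →
      (∀ x ∈ ball (0 : Euc N) ρ, u x = 0) →
      M * lpNormOn N q (unitBall N) u ^ 2 - C * ∫ x in unitBall N, u x ^ 2 ≤
        gagliardo N s (unitBall N) u := by
  have : Nonempty (Fin N) := ⟨⟨0, hN⟩⟩
  have hc : 0 < cNs N s := cNs_pos N ⟨by linarith [hs.1], hs.2⟩
  have hvol : 0 < volume.real (unitBall N) := measureReal_ball_pos volume one_pos
  set W := (volume.real (unitBall N) ^ (1 / q)) ^ 2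
  have hW : 0 < W := by positivity
  have hε : 0 < cNs N s / 2 / (M * W) := by positivity
  obtain ⟨C, hC, hle⟩ := exists_sq_le_mul_gagliardoEnergy_add (E := Euc N) volume hρ hs hε
  refine ⟨M * W * C, by positivity, fun u L hu hrad hzero => ?_⟩
  obtain ⟨f, hf, rfl⟩ := hrad.exists_lipschitzWith_profile hN hu
  rw [finrank_euclideanSpace_fin] at hle
  set T := ∫ x in unitBall N, f ‖x‖ ^ 2
  set G := gagliardoEnergy volume (unitBall N) (N + 2 * s) fun x => f ‖x‖ with hG_def
  have hT : 0 ≤ T := integral_nonneg fun _ => sq_nonneg _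
  have hG : 0 ≤ G := gagliardoEnergy_nonneg _ _ _ _
  have hsup : ∀ x ∈ unitBall N, f ‖x‖ ^ 2 ≤ cNs N s / 2 / (M * W) * G + C * T := by
    intro x hx
    obtain hxρ | hxρ := lt_or_ge ‖x‖ ρ
    · have hfx : f ‖x‖ = 0 := hzero x (mem_ball_zero_iff.2 hxρ)
      rw [hfx, zero_pow two_ne_zero]
      exact add_nonneg (mul_nonneg hε.le hG) (mul_nonneg hC.le hT)
    · exact hle f L hf ‖x‖ hxρ (mem_ball_zero_iff.1 hx).le
  have hnorm : lpNormOn N q (unitBall N) (fun x => f ‖x‖) ^ 2 ≤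
      W * (cNs N s / 2 / (M * W) * G + C * T) :=
    lpNormOn_sq_le hq measure_ball_lt_top.ne (by positivity) hsup
  rw [gagliardo_eq_mul_gagliardoEnergy, ← hG_def, sub_le_iff_le_add]
  calc M * lpNormOn N q (unitBall N) (fun x => f ‖x‖) ^ 2
      ≤ M * (W * (cNs N s / 2 / (M * W) * G + C * T)) := by gcongr
    _ = cNs N s / 2 * G + M * W * C * T := by field_simp

/-- for radial test functions vanishing on B_ρ,
Q_{N,s,B}(u) ≥ M‖u‖²_{2*_s} − C_{ρ,M}‖u‖²_{L²}. -/
theorem statement13 (N : ℕ) (hN : 2 ≤ N) (s : ℝ) (hs : s ∈ Set.Ioo (1/2 : ℝ) 1)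
    (M : ℝ) (hM : 0 < M) (ρ : ℝ) (hρ : ρ ∈ Set.Ioo (0 : ℝ) 1) :
    ∃ C : ℝ, 0 < C ∧ ∀ u : Euc N → ℝ, testFun N (unitBall N) u → IsRadial N u →
      (∀ x ∈ Metric.ball (0 : Euc N) ρ, u x = 0) →
      gagliardo N s (unitBall N) u ≥
        M * (lpNormOn N (critExp N s) (unitBall N) u) ^ 2 -
          C * ∫ x in unitBall N, (u x) ^ 2 := by
  have two_le : (2 : ℝ) ≤ N := mod_cast hN
  have hq : 0 < critExp N s := critExp_pos (two_pos.trans_le hN) (by linarith [hs.2])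
  obtain ⟨C, hC, hle⟩ := statement13_general (two_pos.trans_le hN) hs hq hM hρ.1
  exact ⟨C, hC, fun u hu => hu.exists_lipschitzWith.elim (hle u)⟩
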